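/- arXiv:1008.1856 — 5 statements merged into one kernel-verified Lean document; each statement's English description precedes it below -/
import Mathlib

section
/- For every x ∈ U and all 1 ≤ i, j ≤ n one has ⟨e_i(x), e_j(x)⟩ = δ_{ij} and ⟨e_j(x), x⟩ = 0. In particular, for x ∈ U ∩ S^n the vectors e_1(x), …, e_n(x) form an orthonormal basis of the tangent space T_x S^n = {v ∈ ℝ^{n+1} : ⟨v, x⟩ = 0}. -/
open scoped InnerProductSpace BigOperators

noncomputable section

/-- `s_j(x) = ∑_{r=j}^n x_r²`. -/
def sfun (n j : ℕ) (x : EuclideanSpace ℝ (Fin (n + 1))) : ℝ :=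
  ∑ r : Fin (n + 1), if j ≤ (r : ℕ) then x r ^ 2 else 0

/-- The `j`-th coordinate of `x` (read as a natural-number index, `0` out of range). -/
def coordfun (n : ℕ) (x : EuclideanSpace ℝ (Fin (n + 1))) (j : ℕ) : ℝ :=
  if h : j < n + 1 then x ⟨j, h⟩ else 0

/-- The vector field `e_j(x) = √(s_j/s_{j-1}) ( −∂_{j−1} + (x_{j−1}/s_j) Σ_{r=j}^n x_r ∂_r )`. -/
def efun (n j : ℕ) (x : EuclideanSpace ℝ (Fin (n + 1))) : EuclideanSpace ℝ (Fin (n + 1)) :=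
  WithLp.toLp 2 fun r => Real.sqrt (sfun n j x / sfun n (j - 1) x) *
    (-(if (r : ℕ) = j - 1 then 1 else 0)
      + coordfun n x (j - 1) / sfun n j x * (if j ≤ (r : ℕ) then x r else 0))

/-- `U = {x ∈ ℝ^{n+1} : x_n > 0}`. -/
def Usph (n : ℕ) : Set (EuclideanSpace ℝ (Fin (n + 1))) := {x | 0 < coordfun n x n}

/-- The unit sphere `S^n ⊂ ℝ^{n+1}`. -/
def sph (n : ℕ) : Set (EuclideanSpace ℝ (Fin (n + 1))) :=
  {x | ∑ r : Fin (n + 1), x r ^ 2 = 1}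

lemma sfun_eq_sq_add_sfun_succ {n k : ℕ} (hk : k < n + 1) (x : EuclideanSpace ℝ (Fin (n + 1))) :
    sfun n k x = coordfun n x k ^ 2 + sfun n (k + 1) x := by
  have hcoord : coordfun n x k ^ 2 =
      ∑ r : Fin (n + 1), if r = ⟨k, hk⟩ then x r ^ 2 else 0 := by
    simp [coordfun, hk]
  rw [hcoord, sfun, sfun, ← Finset.sum_add_distrib]
  refine Finset.sum_congr rfl fun r _ => ?_
  rcases lt_trichotomy (r : ℕ) k with h | h | h
  · simp [Fin.ext_iff, h.ne, not_le.2 h, not_le.2 (h.trans k.lt_succ_self)]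
  · simp [Fin.ext_iff, h]
  · simp [Fin.ext_iff, h.ne', h.le, Nat.succ_le_of_lt h]

lemma sfun_pos {n k : ℕ} (hk : k ≤ n) {x : EuclideanSpace ℝ (Fin (n + 1))} (hx : x ∈ Usph n) :
    0 < sfun n k x := by
  have hx' : 0 < x (Fin.last n) := by simpa [Usph, coordfun, Fin.last] using hx
  refine Finset.sum_pos' (fun r _ => by split_ifs <;> positivity)
    ⟨Fin.last n, Finset.mem_univ _, ?_⟩
  simp only [Fin.val_last, hk, if_true]
  positivity

lemma inner_efun_succ {n k : ℕ} (hk : k < n + 1) (x v : EuclideanSpace ℝ (Fin (n + 1))) :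
    ⟪efun n (k + 1) x, v⟫_ℝ = √(sfun n (k + 1) x / sfun n k x) *
      (-v ⟨k, hk⟩ + coordfun n x k / sfun n (k + 1) x *
        ∑ r : Fin (n + 1), if k + 1 ≤ (r : ℕ) then x r * v r else 0) := by
  have hv : v ⟨k, hk⟩ = ∑ r : Fin (n + 1), if r = ⟨k, hk⟩ then v r else 0 := by simp
  rw [hv, Finset.mul_sum, ← Finset.sum_neg_distrib, ← Finset.sum_add_distrib, Finset.mul_sum,
    PiLp.inner_apply]
  refine Finset.sum_congr rfl fun r _ => ?_
  simp only [efun, Nat.add_sub_cancel, RCLike.inner_apply, conj_trivial, Fin.ext_iff]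
  split_ifs <;> ring

lemma inner_efun_succ_self_eq_zero {n k : ℕ} (hk : k < n) {x : EuclideanSpace ℝ (Fin (n + 1))}
    (hx : x ∈ Usph n) : ⟪efun n (k + 1) x, x⟫_ℝ = 0 := by
  have hs : sfun n (k + 1) x ≠ 0 := (sfun_pos hk hx).ne'
  have hsum : (∑ r : Fin (n + 1), if k + 1 ≤ (r : ℕ) then x r * x r else 0) =
      sfun n (k + 1) x := by simp [sfun, sq]
  rw [inner_efun_succ (by omega), hsum, div_mul_cancel₀ _ hs, coordfun, dif_pos (by omega),
    neg_add_cancel, mul_zero]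

lemma inner_efun_succ_of_lt {n k m : ℕ} (hkm : k < m) (hm : m < n)
    {x : EuclideanSpace ℝ (Fin (n + 1))} (hx : x ∈ Usph n) :
    ⟪efun n (k + 1) x, efun n (m + 1) x⟫_ℝ = 0 := by
  have hzero : ∀ r : Fin (n + 1), (r : ℕ) < m → efun n (m + 1) x r = 0 := fun r hr => by
    simp [efun, hr.ne, hr.le.not_gt]
  have hsum : (∑ r : Fin (n + 1), if k + 1 ≤ (r : ℕ) then x r * efun n (m + 1) x r else 0) =
      ⟪efun n (m + 1) x, x⟫_ℝ := by
    rw [PiLp.inner_apply]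
    refine Finset.sum_congr rfl fun r _ => ?_
    split_ifs with h
    · simp
    · simp [hzero r (by omega)]
  rw [inner_efun_succ (by omega), hsum, inner_efun_succ_self_eq_zero hm hx, hzero _ hkm]
  simp

lemma inner_efun_succ_self {n k : ℕ} (hk : k < n) {x : EuclideanSpace ℝ (Fin (n + 1))}
    (hx : x ∈ Usph n) : ⟪efun n (k + 1) x, efun n (k + 1) x⟫_ℝ = 1 := by
  have hs : 0 < sfun n (k + 1) x := sfun_pos hk hx
  have hs' : 0 < sfun n k x := sfun_pos hk.le hx
  have hrec := sfun_eq_sq_add_sfun_succ (hk.trans n.lt_succ_self) x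
  have hsum : (∑ r : Fin (n + 1), if k + 1 ≤ (r : ℕ) then x r * efun n (k + 1) x r else 0) =
      √(sfun n (k + 1) x / sfun n k x) * (coordfun n x k / sfun n (k + 1) x) *
        sfun n (k + 1) x := by
    conv_rhs => rw [sfun.eq_def n (k + 1) x]
    rw [Finset.mul_sum]
    refine Finset.sum_congr rfl fun r _ => ?_
    split_ifs with h
    · have hr : (r : ℕ) ≠ k := by omega
      simp only [efun, Nat.add_sub_cancel, hr, h, if_true, if_false, ← sfun.eq_def]
      ring
    · simp
  have hcoord : efun n (k + 1) x ⟨k, by omega⟩ = -√(sfun n (k + 1) x / sfun n k x) := by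
    simp [efun]
  have hsq : √(sfun n (k + 1) x / sfun n k x) ^ 2 = sfun n (k + 1) x / sfun n k x :=
    Real.sq_sqrt (by positivity)
  rw [inner_efun_succ (by omega), hsum, hcoord]
  calc _ = √(sfun n (k + 1) x / sfun n k x) ^ 2 *
        ((coordfun n x k ^ 2 + sfun n (k + 1) x) / sfun n (k + 1) x) := by
        field_simp
        ring
    _ = 1 := by
        rw [hsq, ← hrec]
        field_simp

lemma orthonormal_efun {n : ℕ} {x : EuclideanSpace ℝ (Fin (n + 1))} (hx : x ∈ Usph n) :
    Orthonormal ℝ fun j : Fin n => efun n ((j : ℕ) + 1) x := by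
  rw [orthonormal_iff_ite]
  intro i j
  rcases lt_trichotomy i j with h | rfl | h
  · rw [inner_efun_succ_of_lt h j.2 hx, if_neg h.ne]
  · rw [inner_efun_succ_self i.2 hx, if_pos rfl]
  · rw [real_inner_comm, inner_efun_succ_of_lt h i.2 hx, if_neg h.ne']

lemma span_efun_eq_orthogonal {n : ℕ} {x : EuclideanSpace ℝ (Fin (n + 1))} (hx : x ∈ Usph n) :
    Submodule.span ℝ (Set.range fun j : Fin n => efun n ((j : ℕ) + 1) x) = (ℝ ∙ x)ᗮ := by
  have hx0 : x ≠ 0 := by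
    rintro rfl
    simp [Usph, coordfun] at hx
  have : Fact (Module.finrank ℝ (EuclideanSpace ℝ (Fin (n + 1))) = n + 1) := ⟨by simp⟩
  refine Submodule.eq_of_le_of_finrank_eq (Submodule.span_le.2 ?_) ?_
  · rintro _ ⟨j, rfl⟩
    exact Submodule.mem_orthogonal_singleton_iff_inner_left.2
      (inner_efun_succ_self_eq_zero j.2 hx)
  · rw [finrank_span_eq_card (orthonormal_efun hx).linearIndependent,
      Submodule.finrank_orthogonal_span_singleton (n := n) hx0, Fintype.card_fin]

/-- For every `x ∈ U` and all `1 ≤ i, j ≤ n` one has `⟨e_i(x), e_j(x)⟩ = δ_{ij}` and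
`⟨e_j(x), x⟩ = 0`.  In particular, for `x ∈ U ∩ S^n` the vectors `e_1(x), …, e_n(x)` form an
orthonormal basis of the tangent space `T_x S^n = {v ∈ ℝ^{n+1} : ⟨v, x⟩ = 0}`. -/
theorem statement0 (n : ℕ) (hn : 1 ≤ n) (x : EuclideanSpace ℝ (Fin (n + 1)))
    (hx : x ∈ Usph n) :
    (∀ i j : ℕ, 1 ≤ i → i ≤ n → 1 ≤ j → j ≤ n →
      ⟪efun n i x, efun n j x⟫_ℝ = if i = j then 1 else 0) ∧
    (∀ j : ℕ, 1 ≤ j → j ≤ n → ⟪efun n j x, x⟫_ℝ = 0) ∧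
    (x ∈ sph n →
      (Submodule.span ℝ (Set.range fun j : Fin n => efun n ((j : ℕ) + 1) x) :
          Set (EuclideanSpace ℝ (Fin (n + 1))))
        = {v | ⟪v, x⟫_ℝ = 0}) := by
  refine ⟨fun i j hi hi' hj hj' => ?_, fun j hj hj' => ?_, fun _ => ?_⟩
  · obtain ⟨i, rfl⟩ := Nat.exists_eq_add_of_le' hi
    obtain ⟨j, rfl⟩ := Nat.exists_eq_add_of_le' hj
    simpa [Fin.ext_iff] using orthonormal_iff_ite.1 (orthonormal_efun hx) ⟨i, hi'⟩ ⟨j, hj'⟩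
  · obtain ⟨j, rfl⟩ := Nat.exists_eq_add_of_le' hj
    exact inner_efun_succ_self_eq_zero hj' hx
  · rw [span_efun_eq_orthogonal hx]
    ext v
    exact Submodule.mem_orthogonal_singleton_iff_inner_left
end
end

section
/- At every point p = (C, r, x̂, A) ∈ Ω with C ∈ M₃(ℝ) invertible and A ∈ M₆(ℝ) invertible, the twelve vectors Z₁(p), Z₂(p), Z₃(p), K₁(p), K₂(p), K₃(p), V₁₂(p), V₁₃(p), V₂₃(p), U₁(p), U₂(p), U₃(p) are linearly independent. (In particular, the flag D³ = D + [D, D] + [D, [D, D]] of the rolling distribution D of SE(3) over 𝔰𝔢(3) has rank 12 at every point of the 27-dimensional configuration space Q = SE(3) × ℝ⁶ × SO(6).) -/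
noncomputable section

attribute [local instance] Matrix.normedAddCommGroup Matrix.normedSpace

/-- The ambient space `M₃(ℝ) × ℝ³` in which `SE(3)` sits. -/
abbrev AmbSE := Matrix (Fin 3) (Fin 3) ℝ × EuclideanSpace ℝ (Fin 3)

/-- The ambient configuration space `Ω = (M₃(ℝ) × ℝ³) × ℝ⁶ × M₆(ℝ)`. -/
abbrev ConfSE := AmbSE × EuclideanSpace ℝ (Fin 6) × Matrix (Fin 6) (Fin 6) ℝ

/-- The elementary `3×3` matrix `E_{ij}`. -/
def E3 (i j : Fin 3) : Matrix (Fin 3) (Fin 3) ℝ := Matrix.single i j 1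

/-- The elementary `6×6` matrix `E_{ab}`. -/
def E6 (a b : Fin 6) : Matrix (Fin 6) (Fin 6) ℝ := Matrix.single a b 1

/-- `Y₁(C, r) = ((1/√2) C(E₁₂ − E₂₁), 0)`. -/
def Yse1 : AmbSE → AmbSE := fun p => ((Real.sqrt 2)⁻¹ • (p.1 * (E3 0 1 - E3 1 0)), 0)

/-- `Y₂(C, r) = ((1/√2) C(E₁₃ − E₃₁), 0)`. -/
def Yse2 : AmbSE → AmbSE := fun p => ((Real.sqrt 2)⁻¹ • (p.1 * (E3 0 2 - E3 2 0)), 0)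

/-- `Y₃(C, r) = ((1/√2) C(E₂₃ − E₃₂), 0)`. -/
def Yse3 : AmbSE → AmbSE := fun p => ((Real.sqrt 2)⁻¹ • (p.1 * (E3 1 2 - E3 2 1)), 0)

/-- `X_k(C, r) = (0, C ε_k)`. -/
def Xse (k : Fin 3) : AmbSE → AmbSE := fun p => (0, WithLp.toLp 2 (p.1.mulVec (Pi.single k 1)))

/-- `M₁ = (1/(2√2))(E₂₃ − E₃₂) + (1/√2)(E₄₅ − E₅₄)`. -/
def Mse1 : Matrix (Fin 6) (Fin 6) ℝ :=
  (2 * Real.sqrt 2)⁻¹ • (E6 1 2 - E6 2 1) + (Real.sqrt 2)⁻¹ • (E6 3 4 - E6 4 3)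

/-- `M₂ = −(1/(2√2))(E₁₃ − E₃₁) + (1/√2)(E₄₆ − E₆₄)`. -/
def Mse2 : Matrix (Fin 6) (Fin 6) ℝ :=
  -(2 * Real.sqrt 2)⁻¹ • (E6 0 2 - E6 2 0) + (Real.sqrt 2)⁻¹ • (E6 3 5 - E6 5 3)

/-- `M₃ = (1/(2√2))(E₁₂ − E₂₁) + (1/√2)(E₅₆ − E₆₅)`. -/
def Mse3 : Matrix (Fin 6) (Fin 6) ℝ :=
  (2 * Real.sqrt 2)⁻¹ • (E6 0 1 - E6 1 0) + (Real.sqrt 2)⁻¹ • (E6 4 5 - E6 5 4)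

/-- The twelve vector fields `Z₁, Z₂, Z₃, K₁, K₂, K₃, V₁₂, V₁₃, V₂₃, U₁, U₂, U₃` on
`Ω = (M₃(ℝ) × ℝ³) × ℝ⁶ × M₆(ℝ)`:
`Z_i = (Y_i, Aε_i, A M_i)`, `K_k = (X_k, Aε_{3+k}, 0)`, `V_{ab} = (0, 0, A(E_{ab} − E_{ba}))`,
`U_i = (0, Aε_i, 0)`. -/
def seFields : Fin 12 → ConfSE → ConfSE :=
  ![fun p => (Yse1 p.1, WithLp.toLp 2 (p.2.2.mulVec (Pi.single 0 1)), p.2.2 * Mse1),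
    fun p => (Yse2 p.1, WithLp.toLp 2 (p.2.2.mulVec (Pi.single 1 1)), p.2.2 * Mse2),
    fun p => (Yse3 p.1, WithLp.toLp 2 (p.2.2.mulVec (Pi.single 2 1)), p.2.2 * Mse3),
    fun p => (Xse 0 p.1, WithLp.toLp 2 (p.2.2.mulVec (Pi.single 3 1)), 0),
    fun p => (Xse 1 p.1, WithLp.toLp 2 (p.2.2.mulVec (Pi.single 4 1)), 0),
    fun p => (Xse 2 p.1, WithLp.toLp 2 (p.2.2.mulVec (Pi.single 5 1)), 0),
    fun p => (0, 0, p.2.2 * (E6 0 1 - E6 1 0)),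
    fun p => (0, 0, p.2.2 * (E6 0 2 - E6 2 0)),
    fun p => (0, 0, p.2.2 * (E6 1 2 - E6 2 1)),
    fun p => (0, WithLp.toLp 2 (p.2.2.mulVec (Pi.single 0 1)), 0),
    fun p => (0, WithLp.toLp 2 (p.2.2.mulVec (Pi.single 1 1)), 0),
    fun p => (0, WithLp.toLp 2 (p.2.2.mulVec (Pi.single 2 1)), 0)]

/-- At every point `p = (C, r, x̂, A) ∈ Ω` with `C` and `A` invertible, the twelve vectors
`Z₁(p), Z₂(p), Z₃(p), K₁(p), K₂(p), K₃(p), V₁₂(p), V₁₃(p), V₂₃(p), U₁(p), U₂(p), U₃(p)` are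
linearly independent (so the flag `D³` of the rolling distribution of `SE(3)` over `𝔰𝔢(3)`
has rank `12` at every point of the `27`-dimensional configuration space). -/
theorem statement12 (p : ConfSE) (hC : IsUnit p.1.1) (hA : IsUnit p.2.2) :
    LinearIndependent ℝ (fun i : Fin 12 => seFields i p) := by
  rw [Fintype.linearIndependent_iff]
  intro g hg
  have hsqrt : Real.sqrt 2 ≠ 0 := by positivity
  simp only [seFields, Fin.sum_univ_succ, Fin.sum_univ_zero, Yse1, Yse2, Yse3, Xse,
    Matrix.cons_val_zero, Matrix.cons_val_succ, Prod.smul_mk, Prod.mk_add_mk, Prod.ext_iff,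
    Prod.fst_zero, Prod.snd_zero, smul_zero, add_zero, zero_add] at hg
  obtain ⟨⟨hrot, -⟩, hvec, hmat⟩ := hg
  -- Cancelling `C` in the rotational component gives the coefficients of the `Z_i`.
  have hrot' : g 0 • (Real.sqrt 2)⁻¹ • (E3 0 1 - E3 1 0) + (g 1 • (Real.sqrt 2)⁻¹ •
      (E3 0 2 - E3 2 0) + g 2 • (Real.sqrt 2)⁻¹ • (E3 1 2 - E3 2 1)) = 0 := by
    refine hC.mul_left_cancel ?_
    simp only [mul_add, Matrix.mul_smul, mul_zero]
    exact hrot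
  have h0 : g 0 = 0 := by simpa [E3, hsqrt] using congrFun (congrFun hrot' 0) 1
  have h1 : g 1 = 0 := by simpa [E3, hsqrt] using congrFun (congrFun hrot' 0) 2
  have h2 : g 2 = 0 := by simpa [E3, hsqrt] using congrFun (congrFun hrot' 1) 2
  -- Cancelling `A` in the remaining components gives the other coefficients.
  have hmat' : g 6 • (E6 0 1 - E6 1 0) + (g 7 • (E6 0 2 - E6 2 0) +
      g 8 • (E6 1 2 - E6 2 1)) = 0 := by
    refine hA.mul_left_cancel ?_
    simp only [mul_add, Matrix.mul_smul, mul_zero]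
    simpa [h0, h1, h2] using hmat
  have h6 : g 6 = 0 := by simpa [E6] using congrFun (congrFun hmat' 0) 1
  have h7 : g 7 = 0 := by simpa [E6] using congrFun (congrFun hmat' 0) 2
  have h8 : g 8 = 0 := by simpa [E6] using congrFun (congrFun hmat' 1) 2
  have hvec' : (![g 9, g 10, g 11, g 3, g 4, g 5] : Fin 6 → ℝ) = 0 := by
    refine Matrix.mulVec_injective_of_isUnit hA ?_
    ext i
    have hi := congrArg (fun v : EuclideanSpace ℝ (Fin 6) => v i) hvec
    simp [h0, h1, h2] at hi
    simp [Matrix.mulVec, dotProduct, Fin.sum_univ_succ]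
    linear_combination hi
  have h9 : g 9 = 0 := congrFun hvec' 0
  have h10 : g 10 = 0 := congrFun hvec' 1
  have h11 : g 11 = 0 := congrFun hvec' 2
  have h3 : g 3 = 0 := congrFun hvec' 3
  have h4 : g 4 = 0 := congrFun hvec' 4
  have h5 : g 5 = 0 := congrFun hvec' 5
  intro i
  fin_cases i <;> assumption
end
end

section
/- For any two vector fields V, W among the twelve fields Z₁, Z₂, Z₃, K₁, K₂, K₃, V₁₂, V₁₃, V₂₃, U₁, U₂, U₃ and every point p ∈ Ω, the Lie bracket [V, W](p) lies in the linear span of the twelve vectors Z₁(p), Z₂(p), Z₃(p), K₁(p), K₂(p), K₃(p), V₁₂(p), V₁₃(p), V₂₃(p), U₁(p), U₂(p), U₃(p). (Consequently the flag of the rolling distribution stabilizes: D⁴ = D³; the configuration space Q, of dimension 27, is foliated by 12-dimensional orbits, and the rolling of SE(3) over 𝔰𝔢(3) is not controllable.) -/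
noncomputable section

attribute [local instance] Matrix.normedAddCommGroup Matrix.normedSpace

/-- The Lie bracket `[V, W](p) = D_{V(p)}W(p) − D_{W(p)}V(p)` of vector fields on a normed
space. -/
def lieBr {F : Type*} [NormedAddCommGroup F] [NormedSpace ℝ F] (V W : F → F) (p : F) : F :=
  fderiv ℝ W p (V p) - fderiv ℝ V p (W p)

/-- Symbols `(S, s, u, N)` of left-invariant fields `(C, r, x, A) ↦ (C S, C s, A u, A N)`. -/
abbrev FieldSymbol :=
  Matrix (Fin 3) (Fin 3) ℝ × (Fin 3 → ℝ) × (Fin 6 → ℝ) × Matrix (Fin 6) (Fin 6) ℝ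

/-- The vector field `(C, r, x, A) ↦ (C S, C s, A u, A N)`, as a linear map of the point. -/
def symbolField (g : FieldSymbol) : ConfSE →ₗ[ℝ] ConfSE where
  toFun p := ((p.1.1 * g.1, WithLp.toLp 2 (p.1.1.mulVec g.2.1)),
    WithLp.toLp 2 (p.2.2.mulVec g.2.2.1), p.2.2 * g.2.2.2)
  map_add' p q := by simp [add_mul, Matrix.add_mulVec]
  map_smul' c p := by simp [Matrix.smul_mulVec]

/-- The value at `p` of the field with a given symbol, as a linear map of the symbol. -/
def symbolEval (p : ConfSE) : FieldSymbol →ₗ[ℝ] ConfSE where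
  toFun g := symbolField g p
  map_add' g h := by simp [symbolField, mul_add, Matrix.mulVec_add]
  map_smul' c g := by simp [symbolField, Matrix.mulVec_smul]

/-- The symbol of the Lie bracket of two left-invariant fields. -/
def symbolBracket (g h : FieldSymbol) : FieldSymbol :=
  (g.1 * h.1 - h.1 * g.1, g.1.mulVec h.2.1 - h.1.mulVec g.2.1,
    g.2.2.2.mulVec h.2.2.1 - h.2.2.2.mulVec g.2.2.1, g.2.2.2 * h.2.2.2 - h.2.2.2 * g.2.2.2)

theorem lieBr_linearMap {F : Type*} [NormedAddCommGroup F] [NormedSpace ℝ F]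
    [FiniteDimensional ℝ F] (L M : F →ₗ[ℝ] F) (p : F) :
    lieBr L M p = M (L p) - L (M p) := by
  have h (T : F →ₗ[ℝ] F) : fderiv ℝ T p = T.toContinuousLinearMap :=
    T.toContinuousLinearMap.fderiv
  simp [lieBr, h]

theorem lieBr_symbolField (g h : FieldSymbol) (p : ConfSE) :
    lieBr (symbolField g) (symbolField h) p = symbolEval p (symbolBracket g h) := by
  rw [lieBr_linearMap]
  simp [symbolField, symbolEval, symbolBracket, mul_sub, Matrix.mulVec_sub, mul_assoc]

/-- Symbols with `S` and `N` skew, `N` block diagonal with lower block `S`, and `s` equal to the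
lower half of `u`. -/
structure IsRollingSymbol (g : FieldSymbol) : Prop where
  skew_left : g.1.transpose = -g.1
  skew_right : g.2.2.2.transpose = -g.2.2.2
  upper_right : ∀ i j : Fin 3, g.2.2.2 (Fin.castAdd 3 i) (Fin.natAdd 3 j) = 0
  lower_right : ∀ i j : Fin 3, g.2.2.2 (Fin.natAdd 3 i) (Fin.natAdd 3 j) = g.1 i j
  lower_vec : ∀ i : Fin 3, g.2.2.1 (Fin.natAdd 3 i) = g.2.1 i

theorem IsRollingSymbol.lower_left {g : FieldSymbol} (hg : IsRollingSymbol g) (i j : Fin 3) :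
    g.2.2.2 (Fin.natAdd 3 i) (Fin.castAdd 3 j) = 0 := by
  have h := congrFun₂ hg.skew_right (Fin.castAdd 3 j) (Fin.natAdd 3 i)
  rwa [Matrix.transpose_apply, Matrix.neg_apply, hg.upper_right, neg_zero] at h

theorem IsRollingSymbol.bracket {g h : FieldSymbol} (hg : IsRollingSymbol g)
    (hh : IsRollingSymbol h) : IsRollingSymbol (symbolBracket g h) where
  skew_left := by
    simp [symbolBracket, Matrix.transpose_mul, hg.skew_left, hh.skew_left]
  skew_right := by
    simp [symbolBracket, Matrix.transpose_mul, hg.skew_right, hh.skew_right]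
  upper_right i j := by
    change (g.2.2.2 * h.2.2.2 - h.2.2.2 * g.2.2.2) _ _ = 0
    rw [Matrix.sub_apply, Matrix.mul_apply, Matrix.mul_apply, Fin.sum_univ_add (a := 3) (b := 3),
      Fin.sum_univ_add (a := 3) (b := 3)]
    simp [-Fin.natAdd_eq_addNat, hg.upper_right, hh.upper_right]
  lower_right i j := by
    change (g.2.2.2 * h.2.2.2 - h.2.2.2 * g.2.2.2) _ _ = (g.1 * h.1 - h.1 * g.1) i j
    rw [Matrix.sub_apply, Matrix.mul_apply, Matrix.mul_apply, Fin.sum_univ_add (a := 3) (b := 3),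
      Fin.sum_univ_add (a := 3) (b := 3)]
    simp [-Fin.natAdd_eq_addNat, hg.lower_left, hh.lower_left, hg.lower_right,
      hh.lower_right, Matrix.mul_apply]
  lower_vec i := by
    change (g.2.2.2.mulVec h.2.2.1 - h.2.2.2.mulVec g.2.2.1) _ =
      (g.1.mulVec h.2.1 - h.1.mulVec g.2.1) i
    simp only [Pi.sub_apply, Matrix.mulVec, dotProduct]
    rw [Fin.sum_univ_add (a := 3) (b := 3), Fin.sum_univ_add (a := 3) (b := 3)]
    simp [-Fin.natAdd_eq_addNat, hg.lower_left, hh.lower_left, hg.lower_right,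
      hh.lower_right, hg.lower_vec,
      hh.lower_vec]

/-- The symbols of the twelve fields `seFields`. -/
def seSymbol : Fin 12 → FieldSymbol :=
  ![((Real.sqrt 2)⁻¹ • (E3 0 1 - E3 1 0), 0, Pi.single 0 1, Mse1),
    ((Real.sqrt 2)⁻¹ • (E3 0 2 - E3 2 0), 0, Pi.single 1 1, Mse2),
    ((Real.sqrt 2)⁻¹ • (E3 1 2 - E3 2 1), 0, Pi.single 2 1, Mse3),
    (0, Pi.single 0 1, Pi.single 3 1, 0),
    (0, Pi.single 1 1, Pi.single 4 1, 0),
    (0, Pi.single 2 1, Pi.single 5 1, 0),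
    (0, 0, 0, E6 0 1 - E6 1 0),
    (0, 0, 0, E6 0 2 - E6 2 0),
    (0, 0, 0, E6 1 2 - E6 2 1),
    (0, 0, Pi.single 0 1, 0),
    (0, 0, Pi.single 1 1, 0),
    (0, 0, Pi.single 2 1, 0)]

theorem seFields_eq_symbolField (k : Fin 12) : seFields k = symbolField (seSymbol k) := by
  funext p
  fin_cases k <;> simp [seFields, seSymbol, symbolField, Yse1, Yse2, Yse3, Xse] <;> rfl

theorem isRollingSymbol_seSymbol (k : Fin 12) : IsRollingSymbol (seSymbol k) := by
  constructor
  · fin_cases k <;> simp [seSymbol, E3, Matrix.transpose_sub, ← smul_neg]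
  · fin_cases k <;> simp [seSymbol, E6, Mse1, Mse2, Mse3, Matrix.transpose_sub] <;> module
  · intro i j
    fin_cases k <;> fin_cases i <;> fin_cases j <;>
      simp [seSymbol, E6, Mse1, Mse2, Mse3]
  · intro i j
    fin_cases k <;> fin_cases i <;> fin_cases j <;>
      simp [seSymbol, E3, E6, Mse1, Mse2, Mse3]
  · intro i
    fin_cases k <;> fin_cases i <;> simp [seSymbol]

theorem IsRollingSymbol.mem_span {g : FieldSymbol} (hg : IsRollingSymbol g) :
    g ∈ Submodule.span ℝ (Set.range seSymbol) := by
  obtain ⟨S, s, u, N⟩ := g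
  rw [Submodule.mem_span_range_iff_exists_fun]
  refine ⟨![√2 * S 0 1, √2 * S 0 2, √2 * S 1 2, s 0, s 1, s 2,
    N 0 1 - S 1 2 / 2, N 0 2 + S 0 2 / 2, N 1 2 - S 0 1 / 2,
    u 0 - √2 * S 0 1, u 1 - √2 * S 0 2, u 2 - √2 * S 1 2], ?_⟩
  have hS (i j : Fin 3) : S j i = -S i j := congrFun₂ hg.skew_left i j
  have hN (i j : Fin 6) : N j i = -N i j := congrFun₂ hg.skew_right i j
  have hS0 (i : Fin 3) : S i i = 0 := self_eq_neg.mp (hS i i)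
  have hN0 (i : Fin 6) : N i i = 0 := self_eq_neg.mp (hN i i)
  have hNS : N 3 4 = S 0 1 ∧ N 3 5 = S 0 2 ∧ N 4 5 = S 1 2 :=
    ⟨hg.lower_right 0 1, hg.lower_right 0 2, hg.lower_right 1 2⟩
  have hU : N 0 3 = 0 ∧ N 0 4 = 0 ∧ N 0 5 = 0 ∧ N 1 3 = 0 ∧ N 1 4 = 0 ∧ N 1 5 = 0 ∧
      N 2 3 = 0 ∧ N 2 4 = 0 ∧ N 2 5 = 0 :=
    ⟨hg.upper_right 0 0, hg.upper_right 0 1, hg.upper_right 0 2,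
      hg.upper_right 1 0, hg.upper_right 1 1, hg.upper_right 1 2,
      hg.upper_right 2 0, hg.upper_right 2 1, hg.upper_right 2 2⟩
  have hu : u 3 = s 0 ∧ u 4 = s 1 ∧ u 5 = s 2 :=
    ⟨hg.lower_vec 0, hg.lower_vec 1, hg.lower_vec 2⟩
  have hr : (√2 : ℝ) ≠ 0 := by positivity
  simp only [Fin.sum_univ_succ, seSymbol]
  refine Prod.ext ?_ (Prod.ext ?_ (Prod.ext ?_ ?_))
  · ext i j
    fin_cases i <;> fin_cases j <;>
      simp [E3, hS0, hS 0 1, hS 0 2, hS 1 2] <;> field_simp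
  · ext i
    fin_cases i <;> simp
  · ext i
    fin_cases i <;> simp [hu]
  · ext i j
    fin_cases i <;> fin_cases j <;>
      simp [E6, Mse1, Mse2, Mse3, hN0, hN 0 1, hN 0 2, hN 1 2, hN 0 3,
        hN 0 4, hN 0 5, hN 1 3, hN 1 4, hN 1 5, hN 2 3, hN 2 4, hN 2 5, hN 3 4, hN 3 5, hN 4 5,
        hNS, hU] <;> field_simp <;> ring

/-- For any two of the twelve fields `Z₁, Z₂, Z₃, K₁, K₂, K₃, V₁₂, V₁₃, V₂₃, U₁, U₂, U₃` and
every point `p ∈ Ω`, the Lie bracket `[V, W](p)` lies in the span of the twelve vectors at `p`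
(so the flag of the rolling distribution of `SE(3)` over `𝔰𝔢(3)` stabilizes: `D⁴ = D³`, the
`27`-dimensional configuration space is foliated by `12`-dimensional orbits, and the rolling is
not controllable). -/
theorem statement13 (i j : Fin 12) (p : ConfSE) :
    lieBr (seFields i) (seFields j) p
      ∈ Submodule.span ℝ (Set.range fun k : Fin 12 => seFields k p) := by
  rw [seFields_eq_symbolField, seFields_eq_symbolField, lieBr_symbolField]
  have h := Submodule.mem_map_of_mem (f := symbolEval p)
    ((isRollingSymbol_seSymbol i).bracket (isRollingSymbol_seSymbol j)).mem_span
  rw [Submodule.map_span, ← Set.range_comp] at h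
  convert h using 4 with k
  rw [seFields_eq_symbolField]
  rfl
end
end

section
/- Let θ : ℝ → ℝ be differentiable with θ(0) = 0, and let N = (1/2)(E₂₃ − E₃₂) + (E₄₅ − E₅₄) ∈ M₆(ℝ). Define A : ℝ → M₆(ℝ) by: A(t)₁₁ = A(t)₆₆ = 1; A(t)₂₂ = A(t)₃₃ = cos(θ(t)/2), A(t)₂₃ = sin(θ(t)/2), A(t)₃₂ = −sin(θ(t)/2); A(t)₄₄ = A(t)₅₅ = cos θ(t), A(t)₄₅ = sin θ(t), A(t)₅₄ = −sin θ(t); and all other entries 0. Then A(0) is the identity matrix, A(t) ∈ SO(6) for every t, and A satisfies the matrix differential equation A′(t) = θ′(t) · A(t) N for all t. -/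
open Matrix

noncomputable section

attribute [local instance] Matrix.normedAddCommGroup Matrix.normedSpace

/-- `N = (1/2)(E₂₃ − E₃₂) + (E₄₅ − E₅₄)`. -/
def Nmat : Matrix (Fin 6) (Fin 6) ℝ :=
  (1 / 2 : ℝ) • (E6 1 2 - E6 2 1) + (E6 3 4 - E6 4 3)

/-- The `SO(6)`-component `A(t)` of the intrinsic rolling of `SE(3)` over `𝔰𝔢(3)` along the
curve of rotation through angle `θ(t)` about the `x₃`-axis and translation along it. -/
def Amat (θ : ℝ → ℝ) (t : ℝ) : Matrix (Fin 6) (Fin 6) ℝ :=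
  !![1, 0, 0, 0, 0, 0;
     0, Real.cos (θ t / 2), Real.sin (θ t / 2), 0, 0, 0;
     0, -Real.sin (θ t / 2), Real.cos (θ t / 2), 0, 0, 0;
     0, 0, 0, Real.cos (θ t), Real.sin (θ t), 0;
     0, 0, 0, -Real.sin (θ t), Real.cos (θ t), 0;
     0, 0, 0, 0, 0, 1]

lemma Amat_zero {θ : ℝ → ℝ} (hθ0 : θ 0 = 0) : Amat θ 0 = 1 := by
  ext i j
  fin_cases i <;> fin_cases j <;> simp [Amat, hθ0]

lemma Amat_transpose_mul_self (θ : ℝ → ℝ) (t : ℝ) : (Amat θ t)ᵀ * Amat θ t = 1 := by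
  have h₁ := Real.cos_sq_add_sin_sq (θ t / 2)
  have h₂ := Real.cos_sq_add_sin_sq (θ t)
  ext i j
  fin_cases i <;> fin_cases j <;> simp [Amat, Matrix.mul_apply, Fin.sum_univ_six] <;> linarith

lemma det_Amat (θ : ℝ → ℝ) (t : ℝ) : (Amat θ t).det = 1 := by
  have h₁ := Real.cos_sq_add_sin_sq (θ t / 2)
  have h₂ := Real.cos_sq_add_sin_sq (θ t)
  simp [Amat, Matrix.det_succ_row_zero, Fin.sum_univ_succ, Fin.succAbove]
  linear_combination (Real.cos (θ t) ^ 2 + Real.sin (θ t) ^ 2) * h₁ + h₂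

lemma Amat_mul_Nmat (θ : ℝ → ℝ) (t : ℝ) : Amat θ t * Nmat =
    !![0, 0, 0, 0, 0, 0;
       0, -Real.sin (θ t / 2) / 2, Real.cos (θ t / 2) / 2, 0, 0, 0;
       0, -Real.cos (θ t / 2) / 2, -Real.sin (θ t / 2) / 2, 0, 0, 0;
       0, 0, 0, -Real.sin (θ t), Real.cos (θ t), 0;
       0, 0, 0, -Real.cos (θ t), -Real.sin (θ t), 0;
       0, 0, 0, 0, 0, 0] := by
  ext i j
  fin_cases i <;> fin_cases j <;>
    simp [Amat, Nmat, E6, Matrix.mul_apply, Matrix.single_apply] <;> ring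

lemma hasDerivAt_Amat {θ : ℝ → ℝ} {t θ' : ℝ} (hθ : HasDerivAt θ θ' t) :
    HasDerivAt (Amat θ) (θ' • (Amat θ t * Nmat)) t := by
  have hc := hθ.cos
  have hs := hθ.sin
  have hc₂ := (hθ.div_const 2).cos
  have hs₂ := (hθ.div_const 2).sin
  rw [Amat_mul_Nmat]
  refine hasDerivAt_pi.2 fun i => hasDerivAt_pi.2 fun j => ?_
  fin_cases i <;> fin_cases j <;> simp [Amat, hasDerivAt_const]
  · exact hc₂.congr_deriv (by ring)
  · exact hs₂.congr_deriv (by ring)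
  · exact hs₂.neg.congr_deriv (by ring)
  · exact hc₂.congr_deriv (by ring)
  · exact hc.congr_deriv (by ring)
  · exact hs.congr_deriv (by ring)
  · exact hs.neg.congr_deriv (by ring)
  · exact hc.congr_deriv (by ring)

/-- `A(0)` is the identity, `A(t) ∈ SO(6)` for every `t`, and `A` satisfies the matrix
differential equation `A′(t) = θ′(t) · A(t) N`. -/
theorem statement15 (θ : ℝ → ℝ) (hθ : Differentiable ℝ θ) (hθ0 : θ 0 = 0) :
    Amat θ 0 = 1 ∧
    (∀ t, (Amat θ t)ᵀ * Amat θ t = 1 ∧ (Amat θ t).det = 1) ∧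
    (∀ t, HasDerivAt (Amat θ) (deriv θ t • (Amat θ t * Nmat)) t) := by
  exact ⟨Amat_zero hθ0, fun t => ⟨Amat_transpose_mul_self θ t, det_Amat θ t⟩,
    fun t => hasDerivAt_Amat (hθ t).hasDerivAt⟩
end
end

section
/- Let θ : ℝ → ℝ be differentiable, and let B ∈ M₆(ℝ) be the skew-symmetric matrix with B₁₄ = 1/√2, B₁₅ = −1/√2, B₂₃ = −1/2, B₃₂ = 1/2, B₄₁ = −1/√2, B₅₁ = 1/√2 and all other entries 0. Define the curves υ¹(t) = (cos θ(t), 0, 0, −(1/√2) sin θ(t), (1/√2) sin θ(t), 0), υ²(t) = (0, cos(θ(t)/2), sin(θ(t)/2), 0, 0, 0), υ³(t) = (0, −sin(θ(t)/2), cos(θ(t)/2), 0, 0, 0), υ⁴(t) = ((1/√2) sin θ(t), 0, 0, (1 + cos θ(t))/2, (1 − cos θ(t))/2, 0), υ⁵(t) = (−(1/√2) sin θ(t), 0, 0, (1 − cos θ(t))/2, (1 + cos θ(t))/2, 0), υ⁶(t) = (0, 0, 0, 0, 0, 1) in ℝ⁶. Then each υ^λ (λ = 1, …, 6) satisfies the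 linear differential equation (υ^λ)′(t) = θ′(t) · B υ^λ(t), and for every t the six vectors υ¹(t), …, υ⁶(t) form an orthonormal basis of ℝ⁶. -/
open scoped InnerProductSpace

noncomputable section

/-- The skew-symmetric matrix `B ∈ M₆(ℝ)` with `B₁₄ = 1/√2`, `B₁₅ = −1/√2`, `B₂₃ = −1/2`,
`B₃₂ = 1/2`, `B₄₁ = −1/√2`, `B₅₁ = 1/√2` and all other entries `0`. -/
def Bmat : Matrix (Fin 6) (Fin 6) ℝ :=
  !![0, 0, 0, (Real.sqrt 2)⁻¹, -(Real.sqrt 2)⁻¹, 0;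
     0, 0, -(1 / 2 : ℝ), 0, 0, 0;
     0, (1 / 2 : ℝ), 0, 0, 0, 0;
     -(Real.sqrt 2)⁻¹, 0, 0, 0, 0, 0;
     (Real.sqrt 2)⁻¹, 0, 0, 0, 0, 0;
     0, 0, 0, 0, 0, 0]

/-- The coefficient curves `υ¹(t), …, υ⁶(t)` in `ℝ⁶` of the normal parallel frame
`ε₁(t), …, ε₆(t)` along the curve `x(t) ⊂ ι(SE(3)) ⊂ ℝ¹⁶`. -/
def ups (θ : ℝ → ℝ) : Fin 6 → ℝ → EuclideanSpace ℝ (Fin 6) :=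
  ![fun t => !₂[Real.cos (θ t), 0, 0,
      -((Real.sqrt 2)⁻¹ * Real.sin (θ t)), (Real.sqrt 2)⁻¹ * Real.sin (θ t), 0],
    fun t => !₂[0, Real.cos (θ t / 2), Real.sin (θ t / 2), 0, 0, 0],
    fun t => !₂[0, -Real.sin (θ t / 2), Real.cos (θ t / 2), 0, 0, 0],
    fun t => !₂[(Real.sqrt 2)⁻¹ * Real.sin (θ t), 0, 0,
      (1 + Real.cos (θ t)) / 2, (1 - Real.cos (θ t)) / 2, 0],
    fun t => !₂[-((Real.sqrt 2)⁻¹ * Real.sin (θ t)), 0, 0,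
      (1 - Real.cos (θ t)) / 2, (1 + Real.cos (θ t)) / 2, 0],
    fun t => !₂[0, 0, 0, 0, 0, 1]]

/-- A curve in Euclidean space is differentiable when its coordinates are. -/
theorem hasDerivAt_euclideanSpace {ι : Type*} [Fintype ι] {f : ℝ → EuclideanSpace ℝ ι}
    {f' : EuclideanSpace ℝ ι} {t : ℝ} (h : ∀ i, HasDerivAt (fun s => f s i) (f' i) t) :
    HasDerivAt f f' t :=
  ((PiLp.hasFDerivAt_toLp 2 _).comp_hasDerivAt t (hasDerivAt_pi.2 h) :)

theorem inv_sqrt_two_mul_self : (√2 : ℝ)⁻¹ * (√2)⁻¹ = 1 / 2 := by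
  rw [← mul_inv, Real.mul_self_sqrt zero_le_two, one_div]

theorem hasDerivAt_ups {θ : ℝ → ℝ} {t : ℝ} (hθ : DifferentiableAt ℝ θ t) (l : Fin 6) :
    HasDerivAt (ups θ l)
      (deriv θ t • (WithLp.toLp 2 (Bmat.mulVec (ups θ l t)) : EuclideanSpace ℝ (Fin 6))) t := by
  have hs := hθ.hasDerivAt.sin
  have hc := hθ.hasDerivAt.cos
  have hs' := (hθ.hasDerivAt.div_const 2).sin
  have hc' := (hθ.hasDerivAt.div_const 2).cos
  have hr := inv_sqrt_two_mul_self
  refine hasDerivAt_euclideanSpace fun i => ?_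
  fin_cases l <;> fin_cases i <;> simp [ups, Bmat, hasDerivAt_const]
  all_goals first
    | (refine hc.congr_deriv ?_; grind)
    | (refine (hs.const_mul _).congr_deriv ?_; grind)
    | (refine (hs.const_mul _).neg.congr_deriv ?_; grind)
    | (refine hc'.congr_deriv ?_; grind)
    | (refine hs'.congr_deriv ?_; grind)
    | (refine hs'.neg.congr_deriv ?_; grind)
    | (refine ((hc.const_add _).div_const _).congr_deriv ?_; grind)
    | (refine ((hc.const_sub _).div_const _).congr_deriv ?_; grind)

theorem orthonormal_ups (θ : ℝ → ℝ) (t : ℝ) : Orthonormal ℝ (fun l : Fin 6 => ups θ l t) := by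
  have h := Real.sin_sq_add_cos_sq (θ t)
  have h' := Real.sin_sq_add_cos_sq (θ t / 2)
  have hr := inv_sqrt_two_mul_self
  rw [orthonormal_iff_ite]
  intro i j
  rw [PiLp.inner_apply, Fin.sum_univ_six]
  fin_cases i <;> fin_cases j <;> simp [ups] <;> grind

/-- Each `υ^λ` satisfies the linear differential equation `(υ^λ)′(t) = θ′(t) · B υ^λ(t)`, and
for every `t` the six vectors `υ¹(t), …, υ⁶(t)` form an orthonormal basis of `ℝ⁶`. -/
theorem statement16 (θ : ℝ → ℝ) (hθ : Differentiable ℝ θ) :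
    (∀ (l : Fin 6) (t : ℝ),
      HasDerivAt (ups θ l) (deriv θ t • (WithLp.toLp 2 (Bmat.mulVec (ups θ l t)) : EuclideanSpace ℝ (Fin 6))) t) ∧
    (∀ t : ℝ, Orthonormal ℝ (fun l : Fin 6 => ups θ l t) ∧
      Submodule.span ℝ (Set.range fun l : Fin 6 => ups θ l t) = ⊤) := by
  refine ⟨fun l t => hasDerivAt_ups (hθ t) l, fun t => ⟨orthonormal_ups θ t, ?_⟩⟩
  exact (orthonormal_ups θ t).linearIndependent.span_eq_top_of_card_eq_finrank' (by simp)
end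
end
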